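/- Let P₁, P₂, P₃ ∈ SL(2,ℂ) generate an irreducible subgroup 𝒫, set P₀ = Id, and let T be the 4×4 Gram matrix T_{ij} = (1/2)trace(Pᵢ·adj(Pⱼ)). Then there exists C ∈ SL(2,ℂ) with C·𝒫·C⁻¹ ⊆ SU(2) if and only if T is real and positive semidefinite. -/

import Mathlib

open Matrix

abbrev M2 := Matrix (Fin 2) (Fin 2) ℂ

def GoodW (W : Submodule ℝ M2) : Prop :=
  (1 : M2) ∈ W ∧ ∀ X ∈ W, X.det.im = 0 ∧ 0 ≤ X.det.re ∧ (X.det = 0 → X = 0)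

def QuatM (X : M2) : Prop :=
  X 1 1 = star (X 0 0) ∧ X 1 0 = - star (X 0 1)

def conjW (C : Matrix.SpecialLinearGroup (Fin 2) ℂ) (W : Submodule ℝ M2) : Submodule ℝ M2 where
  carrier := {X | (C⁻¹).1 * X * C.1 ∈ W}
  add_mem' := by
    intro a b ha hb
    simp only [Set.mem_ofPred_eq] at *
    rw [Matrix.mul_add, Matrix.add_mul]
    exact W.add_mem ha hb
  zero_mem' := by simp
  smul_mem' := by
    intro c x hx
    simp only [Set.mem_ofPred_eq] at *
    rw [Matrix.mul_smul, Matrix.smul_mul]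
    exact W.smul_mem c hx

lemma inv_mul_val (C : Matrix.SpecialLinearGroup (Fin 2) ℂ) : (C⁻¹).1 * C.1 = 1 := by
  exact congrArg Subtype.val (inv_mul_cancel C)

lemma mul_inv_val (C : Matrix.SpecialLinearGroup (Fin 2) ℂ) : C.1 * (C⁻¹).1 = 1 := by
  exact congrArg Subtype.val (mul_inv_cancel C)

lemma mem_conjW (C : Matrix.SpecialLinearGroup (Fin 2) ℂ) (W : Submodule ℝ M2) (X : M2) :
    X ∈ conjW C W ↔ (C⁻¹).1 * X * C.1 ∈ W := Iff.rfl

lemma conj_mem_conjW (C : Matrix.SpecialLinearGroup (Fin 2) ℂ) (W : Submodule ℝ M2) (X : M2)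
    (h : X ∈ W) : C.1 * X * (C⁻¹).1 ∈ conjW C W := by
  rw [mem_conjW]
  have : (C⁻¹).1 * (C.1 * X * (C⁻¹).1) * C.1 = X := by
    calc _ = ((C⁻¹).1 * C.1) * X * ((C⁻¹).1 * C.1) := by simp only [Matrix.mul_assoc]
      _ = X := by rw [inv_mul_val]; simp
  rwa [this]

lemma conjW_good (C : Matrix.SpecialLinearGroup (Fin 2) ℂ) (W : Submodule ℝ M2) (h : GoodW W) :
    GoodW (conjW C W) := by
  refine ⟨?_, ?_⟩
  · rw [mem_conjW, Matrix.mul_one, inv_mul_val]; exact h.1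
  · intro X hX
    rw [mem_conjW] at hX
    have h1 := h.2 _ hX
    have hd : ((C⁻¹).1 * X * C.1).det = X.det := by
      rw [Matrix.det_mul, Matrix.det_mul, C.2, (C⁻¹).2]; ring
    rw [hd] at h1
    refine ⟨h1.1, h1.2.1, fun h0 => ?_⟩
    have h2 := h1.2.2 h0
    calc X = (C.1 * (C⁻¹).1) * X * (C.1 * (C⁻¹).1) := by rw [mul_inv_val]; simp
      _ = C.1 * ((C⁻¹).1 * X * C.1) * (C⁻¹).1 := by simp only [Matrix.mul_assoc]
      _ = 0 := by rw [h2]; simp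

lemma diag_shape (W : Submodule ℝ M2) (h : GoodW W) (hD : !![Complex.I, 0; 0, -Complex.I] ∈ W)
    (X : M2) (hX : X ∈ W) : X 1 1 = star (X 0 0) := by
  have h0 := (h.2 _ hX).1
  have h1 := (h.2 _ (W.add_mem hX h.1)).1
  have h2 := (h.2 _ (W.add_mem hX hD)).1
  simp [Matrix.det_fin_two] at h0 h1 h2
  apply Complex.ext
  · simp; linarith
  · simp; linarith

lemma lemA (W : Submodule ℝ M2) (h : GoodW W) (hD : !![Complex.I, 0; 0, -Complex.I] ∈ W)
    (hJ : !![0, 1; -1, 0] ∈ W) (X : M2) (hX : X ∈ W) : QuatM X := by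
  have hd := diag_shape W h hD X hX
  refine ⟨hd, ?_⟩
  have h0 := (h.2 _ hX).1
  have h1 := (h.2 _ (W.add_mem hX hJ)).1
  have h2 := h.2 _ (W.sub_mem (W.sub_mem (W.sub_mem hX (W.smul_mem (X 0 0).re h.1))
    (W.smul_mem (X 0 0).im hD)) (W.smul_mem (((X 0 1).re - (X 1 0).re)/2) hJ))
  obtain ⟨h2, h3, -⟩ := h2
  simp [Matrix.det_fin_two, hd] at h0 h1 h2 h3
  have e1 : (X 0 1).im = (X 1 0).im := by linarith
  rw [e1] at h2 h3
  ring_nf at h2 h3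
  have key : (X 0 1).re + (X 1 0).re = 0 := by
    have h4 : (X 1 0).im * ((X 0 1).re + (X 1 0).re) = 0 := by linarith
    rcases mul_eq_zero.1 h4 with h5 | h5
    · rw [h5] at h3
      nlinarith [sq_nonneg ((X 0 1).re + (X 1 0).re)]
    · exact h5
  apply Complex.ext
  · simp; linarith
  · simp; linarith

lemma lemB (W : Submodule ℝ M2) (h : GoodW W) (hD : !![Complex.I, 0; 0, -Complex.I] ∈ W) :
    ∃ C : Matrix.SpecialLinearGroup (Fin 2) ℂ, ∀ X ∈ W, QuatM (C.1 * X * (C⁻¹).1) := by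
  by_cases hall : ∀ X ∈ W, X 0 1 = 0 ∧ X 1 0 = 0
  · refine ⟨1, fun X hX => ?_⟩
    have := hall X hX
    simp [QuatM, this, diag_shape W h hD X hX]
  push Not at hall
  obtain ⟨X, hX, hne⟩ := hall
  have hd := diag_shape W h hD X hX
  set Y : M2 := X - (X 0 0).re • (1 : M2) - (X 0 0).im • !![Complex.I, 0; 0, -Complex.I] with hY
  have hYW : Y ∈ W := W.sub_mem (W.sub_mem hX (W.smul_mem (X 0 0).re h.1))
    (W.smul_mem (X 0 0).im hD)
  have y00 : Y 0 0 = 0 := by apply Complex.ext <;> simp [hY]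
  have y11 : Y 1 1 = 0 := by apply Complex.ext <;> simp [hY, hd]
  have y01 : Y 0 1 = X 0 1 := by simp [hY]
  have y10 : Y 1 0 = X 1 0 := by simp [hY]
  obtain ⟨g1, g2, g3⟩ := h.2 Y hYW
  have g4 : Y.det ≠ 0 := by
    intro h0
    have h5 := g3 h0
    rw [h5] at y01 y10
    exact hne y01.symm y10.symm
  have gdet : Y.det = - (Y 0 1 * Y 1 0) := by rw [Matrix.det_fin_two, y00]; ring
  have gpos : 0 < Y.det.re := lt_of_le_of_ne g2 (fun h0 => g4 (Complex.ext h0.symm g1))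
  set c : ℝ := (Real.sqrt Y.det.re)⁻¹ with hc
  have hc2 : (c : ℂ)^2 * Y.det = 1 := by
    have e : Y.det = (Y.det.re : ℂ) := Complex.ext rfl g1
    rw [e, ← Complex.ofReal_pow, ← Complex.ofReal_mul, hc, inv_pow, Real.sq_sqrt g2,
      inv_mul_cancel₀ gpos.ne', Complex.ofReal_one]
  have y01ne : (c : ℂ) * Y 0 1 ≠ 0 := by
    intro h0
    have : (c : ℂ)^2 * Y.det = -((c : ℂ) * Y 0 1) * (c * Y 1 0) := by rw [gdet]; ring
    rw [hc2, h0] at this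
    simp at this
  obtain ⟨t, ht⟩ := IsAlgClosed.exists_pow_nat_eq ((c : ℂ) * Y 0 1)⁻¹ (n := 2) (by norm_num)
  have tne : t ≠ 0 := by 
    rintro rfl
    rw [zero_pow two_ne_zero] at ht
    exact inv_ne_zero y01ne ht.symm
  let C : Matrix.SpecialLinearGroup (Fin 2) ℂ := ⟨!![t, 0; 0, t⁻¹], by
    simp [Matrix.det_fin_two, tne]⟩
  have hC1 : C.1 = !![t, 0; 0, t⁻¹] := rfl
  have hC2 : (C⁻¹).1 = !![t⁻¹, 0; 0, t] := by
    rw [Matrix.SpecialLinearGroup.coe_inv, hC1, Matrix.adjugate_fin_two]; simp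
  have hCJ : C.1 * (c • Y) * (C⁻¹).1 = !![0, 1; -1, 0] := by
    have e1 : t ^ 2 * (c * Y 0 1) = 1 := by rw [ht, inv_mul_cancel₀ y01ne]
    have e2 : (c * Y 0 1) * (c * Y 1 0) = -1 := by rw [gdet] at hc2; linear_combination -hc2
    have e3 : c * Y 1 0 = - t^2 := by linear_combination t^2 * e2 - c * Y 1 0 * e1
    have hcY : c • Y = !![0, c * Y 0 1; c * Y 1 0, 0] := by
      ext i j
      fin_cases i <;> fin_cases j <;> simp [y00, y11]
    rw [hC1, hC2, hcY, e3]
    ext i j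
    fin_cases i <;> fin_cases j <;> simp [Matrix.mul_apply, Fin.sum_univ_two]
    · linear_combination e1
    · field_simp
  have hCD : C.1 * !![Complex.I, 0; 0, -Complex.I] * (C⁻¹).1 = !![Complex.I, 0; 0, -Complex.I] := by
    rw [hC1, hC2]
    ext i j
    fin_cases i <;> fin_cases j <;>
      simp [Matrix.mul_apply,
        Fin.sum_univ_two] <;> field_simp
  refine ⟨C, fun Z hZ => lemA (conjW C W) (conjW_good C W h) ?_ ?_ _ (conj_mem_conjW C W Z hZ)⟩
  · rw [← hCD]; exact conj_mem_conjW C W _ hD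
  · rw [← hCJ]; exact conj_mem_conjW C W _ (W.smul_mem c hYW)

lemma diagz (a : M2) (htr : a 1 1 = - a 0 0) (hdet : a.det = 1) :
    ∃ C : Matrix.SpecialLinearGroup (Fin 2) ℂ,
      C.1 * a * (C⁻¹).1 = !![Complex.I, 0; 0, -Complex.I] := by
  rw [Matrix.det_fin_two, htr] at hdet
  have main : ∃ M : M2, M.det ≠ 0 ∧ a * M = M * !![Complex.I, 0; 0, -Complex.I] := by
    have hI := Complex.I_mul_I
    by_cases hq : a 0 1 = 0
    · by_cases hr : a 1 0 = 0
      · have : (a 0 0 - Complex.I) * (a 0 0 + Complex.I) = 0 := by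
          rw [hq] at hdet; linear_combination -hdet - hI
        rcases mul_eq_zero.1 this with h | h
        · refine ⟨1, by simp, ?_⟩
          have h' : a 0 0 = Complex.I := by linear_combination h
          ext i j
          fin_cases i <;> fin_cases j <;> simp [htr, hq, hr, h']
        · refine ⟨!![0, 1; -1, 0], by simp [Matrix.det_fin_two], ?_⟩
          have h' : a 0 0 = -Complex.I := by linear_combination h
          ext i j
          fin_cases i <;> fin_cases j <;> 
            simp [htr, hq, hr, h', Matrix.mul_apply, Fin.sum_univ_two]
      · refine ⟨!![Complex.I + a 0 0, a 0 0 - Complex.I; a 1 0, a 1 0], ?_, ?_⟩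
        · have : (!![Complex.I + a 0 0, a 0 0 - Complex.I; a 1 0, a 1 0] : M2).det
              = 2 * Complex.I * a 1 0 := by simp [Matrix.det_fin_two]; ring
          rw [this]; simp [hr]
        · ext i j
          fin_cases i <;> fin_cases j <;>
            simp [htr, Matrix.mul_apply, Fin.sum_univ_two]
          · linear_combination -hdet - hI
          · linear_combination -hdet - hI
          · ring
          · ring
    · refine ⟨!![a 0 1, a 0 1; Complex.I - a 0 0, -Complex.I - a 0 0], ?_, ?_⟩
      · have : (!![a 0 1, a 0 1; Complex.I - a 0 0, -Complex.I - a 0 0] : M2).det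
            = -2 * Complex.I * a 0 1 := by simp [Matrix.det_fin_two]; ring
        rw [this]; simp [hq]
      · ext i j
        fin_cases i <;> fin_cases j <;>
          simp [htr, Matrix.mul_apply, Fin.sum_univ_two]
        · ring
        · ring
        · linear_combination -hdet - hI
        · linear_combination -hdet - hI
  obtain ⟨M, hM, hMa⟩ := main
  obtain ⟨t, ht⟩ := IsAlgClosed.exists_pow_nat_eq (M.det)⁻¹ (n := 2) (by norm_num)
  let N : Matrix.SpecialLinearGroup (Fin 2) ℂ := ⟨t • M, by
    rw [Matrix.det_smul]; simp [ht, hM]⟩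
  have hN : a * N.1 = N.1 * !![Complex.I, 0; 0, -Complex.I] := by
    simp only [N]
    rw [Matrix.mul_smul, hMa, Matrix.smul_mul]
  refine ⟨N⁻¹, ?_⟩
  rw [inv_inv, Matrix.mul_assoc, hN, ← Matrix.mul_assoc, inv_mul_val, Matrix.one_mul]

lemma lemC (W : Submodule ℝ M2) (h : GoodW W) :
    ∃ C : Matrix.SpecialLinearGroup (Fin 2) ℂ, ∀ X ∈ W, QuatM (C.1 * X * (C⁻¹).1) := by
  have htr : ∀ X ∈ W, (X 0 0 + X 1 1).im = 0 := by
    intro X hX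
    have h0 := (h.2 _ hX).1
    have h1 := (h.2 _ (W.add_mem hX h.1)).1
    simp [Matrix.det_fin_two] at h0 h1 ⊢
    linarith
  let τ : M2 → M2 := fun X => X - ((X 0 0 + X 1 1).re / 2) • (1 : M2)
  have hτW : ∀ X ∈ W, τ X ∈ W := fun X hX => W.sub_mem hX (W.smul_mem _ h.1)
  by_cases hall : ∀ X ∈ W, τ X = 0
  · refine ⟨1, fun X hX => ?_⟩
    have h1 : X = ((X 0 0 + X 1 1).re / 2) • (1 : M2) := sub_eq_zero.1 (hall X hX)
    generalize (X 0 0 + X 1 1).re / 2 = r at h1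
    rw [h1]
    simp [QuatM]
  push Not at hall
  obtain ⟨X, hX, hne⟩ := hall
  have hYW := hτW X hX
  have hYtr : (τ X) 1 1 = - (τ X) 0 0 := by
    have := htr X hX
    simp at this
    apply Complex.ext
    · simp [τ]; ring
    · simp [τ]; linarith
  generalize τ X = Y at *
  obtain ⟨g1, g2, g3⟩ := h.2 Y hYW
  have g4 : Y.det ≠ 0 := fun h0 => hne (g3 h0)
  have gpos : 0 < Y.det.re := lt_of_le_of_ne g2 (fun h0 => g4 (Complex.ext h0.symm g1))
  set c : ℝ := (Real.sqrt Y.det.re)⁻¹ with hc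
  have hc2 : (c : ℂ)^2 * Y.det = 1 := by
    have e : Y.det = (Y.det.re : ℂ) := Complex.ext rfl g1
    rw [e, ← Complex.ofReal_pow, ← Complex.ofReal_mul, hc, inv_pow, Real.sq_sqrt g2,
      inv_mul_cancel₀ gpos.ne', Complex.ofReal_one]
  obtain ⟨C, hC⟩ := diagz (c • Y) (by simp [hYtr]) (by
    rw [← hc2]; simp [Matrix.det_fin_two]; try ring)
  obtain ⟨E, hE⟩ := lemB (conjW C W) (conjW_good C W h) (by
    rw [← hC]; exact conj_mem_conjW C W _ (W.smul_mem c hYW))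
  refine ⟨E * C, fun Z hZ => ?_⟩
  have := hE _ (conj_mem_conjW C W Z hZ)
  have e : (E * C).1 * Z * ((E * C)⁻¹).1 = E.1 * (C.1 * Z * (C⁻¹).1) * (E⁻¹).1 := by
    rw [_root_.mul_inv_rev]
    change (E.1 * C.1) * Z * ((C⁻¹).1 * (E⁻¹).1) = _
    simp only [Matrix.mul_assoc]
  rw [e]; exact this

lemma quat_unitary (X : M2) (hX : QuatM X) (hd : X.det = 1) : X ∈ Matrix.unitaryGroup (Fin 2) ℂ := by
  rw [Matrix.mem_unitaryGroup_iff]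
  obtain ⟨h1, h2⟩ := hX
  rw [Matrix.det_fin_two, h1, h2] at hd
  ext i j
  fin_cases i <;> fin_cases j <;>
    simp [Matrix.mul_apply, Fin.sum_univ_two, Matrix.star_apply, h1, h2] at hd ⊢
  · linear_combination hd
  · ring
  · ring
  · linear_combination hd

lemma unitary_quat (X : M2) (hX : X ∈ Matrix.unitaryGroup (Fin 2) ℂ) (hd : X.det = 1) :
    QuatM X := by
  rw [Matrix.mem_unitaryGroup_iff] at hX
  have h : star X = X.adjugate := by
    calc star X = (X.adjugate * X) * star X := by rw [Matrix.adjugate_mul, hd]; simp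
      _ = X.adjugate * (X * star X) := by rw [Matrix.mul_assoc]
      _ = _ := by rw [hX, Matrix.mul_one]
  have h00 := congrFun (congrFun h 0) 0
  have h10 := congrFun (congrFun h 1) 0
  simp [Matrix.adjugate_fin_two, Matrix.star_apply] at h00 h10
  exact ⟨by simp [h00], by simp [h10]⟩

lemma quat_add (X Y : M2) (hX : QuatM X) (hY : QuatM Y) : QuatM (X + Y) := by
  obtain ⟨h1, h2⟩ := hX
  obtain ⟨h3, h4⟩ := hY
  refine ⟨?_, ?_⟩
  · simp [h1, h3]
  · simp [h2, h4]; ring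

lemma quat_smul (c : ℝ) (X : M2) (hX : QuatM X) : QuatM (c • X) := by
  obtain ⟨h1, h2⟩ := hX
  refine ⟨?_, ?_⟩
  · simp [h1]
  · simp [h2]

lemma quat_det (X : M2) (hX : QuatM X) : X.det.im = 0 ∧ 0 ≤ X.det.re := by
  obtain ⟨h1, h2⟩ := hX
  rw [Matrix.det_fin_two, h1, h2]
  refine ⟨?_, ?_⟩
  · simp; ring
  · simp; nlinarith [sq_nonneg (X 0 0).re, sq_nonneg (X 0 0).im, sq_nonneg (X 0 1).re,
      sq_nonneg (X 0 1).im]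

lemma polar (A B : M2) : (A * B.adjugate).trace = (A + B).det - A.det - B.det := by
  simp [Matrix.det_fin_two, Matrix.adjugate_fin_two, Matrix.trace_fin_two, Matrix.mul_apply,
    Fin.sum_univ_two]
  ring

lemma det_comb (P : Fin 4 → M2) (v : Fin 4 → ℝ) :
    (∑ i, v i • P i).det =
      ∑ i, ∑ j, (v i : ℂ) * ((1/2 : ℂ) * (P i * (P j).adjugate).trace) * v j := by
  simp only [polar]
  simp [Fin.sum_univ_four, Matrix.det_fin_two]
  ring

/-- A degenerate vector gives an invariant line. -/
lemma nilp_line (X : M2) (htr : X 1 1 = - X 0 0) (hdet : X.det = 0) (hne : X ≠ 0) :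
    ∃ ℓ : Fin 2 → ℂ, ℓ ≠ 0 ∧ ∀ P : M2, (X * P).trace = 0 → ∃ μ : ℂ, P.mulVec ℓ = μ • ℓ := by
  rw [Matrix.det_fin_two, htr] at hdet
  by_cases hz : X 1 0 = 0
  · have hx : X 0 0 = 0 := by
      rw [hz] at hdet
      have : X 0 0 * X 0 0 = 0 := by linear_combination -hdet
      simpa using this
    have hy : X 0 1 ≠ 0 := by
      intro hy
      apply hne
      ext i j
      fin_cases i <;> fin_cases j <;> simp [htr, hx, hy, hz]
    refine ⟨![1, 0], fun h => by simpa using congrFun h 0, fun P hP => ⟨P 0 0, ?_⟩⟩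
    simp [Matrix.trace_fin_two, Matrix.mul_apply, Fin.sum_univ_two, htr, hx, hz, hy] at hP
    ext i
    fin_cases i <;> simp [Matrix.mulVec, dotProduct, Fin.sum_univ_two, hP]
  · refine ⟨![X 0 0, X 1 0], fun h => hz (by simpa using congrFun h 1), fun P hP =>
      ⟨(P 1 0 * X 0 0 + P 1 1 * X 1 0) / X 1 0, ?_⟩⟩
    simp [Matrix.trace_fin_two, Matrix.mul_apply, Fin.sum_univ_two, htr] at hP
    ext i
    fin_cases i <;> simp [Matrix.mulVec, dotProduct, Fin.sum_univ_two]
    · field_simp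
      linear_combination X 1 0 * hP + P 1 0 * hdet
    · field_simp

lemma closure_line (S : Set (Matrix.SpecialLinearGroup (Fin 2) ℂ)) (ℓ : Fin 2 → ℂ)
    (hℓ : ℓ ≠ 0) (hS : ∀ g ∈ S, ∃ μ : ℂ, g.1.mulVec ℓ = μ • ℓ) :
    ∀ g ∈ Subgroup.closure S, ∃ μ : ℂ, g.1.mulVec ℓ = μ • ℓ := by
  intro g hg
  induction hg using Subgroup.closure_induction with
  | mem x hx => exact hS x hx
  | one => exact ⟨1, by simp⟩
  | mul x y _ _ hx hy =>
    obtain ⟨a, ha⟩ := hx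
    obtain ⟨b, hb⟩ := hy
    refine ⟨b * a, ?_⟩
    change (x.1 * y.1).mulVec ℓ = _
    rw [← Matrix.mulVec_mulVec, hb, Matrix.mulVec_smul, ha, smul_smul]
  | inv x _ hx =>
    obtain ⟨a, ha⟩ := hx
    have h1 : (x⁻¹).1.mulVec (x.1.mulVec ℓ) = ℓ := by
      rw [Matrix.mulVec_mulVec, inv_mul_val, Matrix.one_mulVec]
    rw [ha, Matrix.mulVec_smul] at h1
    have ha0 : a ≠ 0 := by
      rintro rfl
      exact hℓ (by simpa using h1.symm)
    refine ⟨a⁻¹, ?_⟩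
    rw [eq_inv_smul_iff₀ ha0]
    exact h1

lemma closure_unitary (S : Set (Matrix.SpecialLinearGroup (Fin 2) ℂ))
    (C : Matrix.SpecialLinearGroup (Fin 2) ℂ)
    (hS : ∀ g ∈ S, (C * g * C⁻¹).1 ∈ Matrix.unitaryGroup (Fin 2) ℂ) :
    ∀ g ∈ Subgroup.closure S, (C * g * C⁻¹).1 ∈ Matrix.unitaryGroup (Fin 2) ℂ := by
  intro g hg
  induction hg using Subgroup.closure_induction with
  | mem x hx => exact hS x hx
  | one =>
    rw [mul_one, mul_inv_cancel]
    exact one_mem _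
  | mul x y _ _ hx hy =>
    have e : C * (x * y) * C⁻¹ = (C * x * C⁻¹) * (C * y * C⁻¹) := by group
    rw [e]
    exact mul_mem hx hy
  | inv x _ hx =>
    have e : C * x⁻¹ * C⁻¹ = (C * x * C⁻¹)⁻¹ := by group
    rw [e]
    generalize C * x * C⁻¹ = y at hx
    have h2 : (y⁻¹).1 = star y.1 := by
      have h1 := (Matrix.mem_unitaryGroup_iff).1 hx
      calc (y⁻¹).1 = (y⁻¹).1 * (y.1 * star y.1) := by rw [h1, Matrix.mul_one]
        _ = ((y⁻¹).1 * y.1) * star y.1 := by rw [Matrix.mul_assoc]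
        _ = _ := by rw [inv_mul_val, Matrix.one_mul]
    rw [h2]
    exact Unitary.star_mem hx

lemma null_orth (W : Submodule ℝ M2) (hW : ∀ X ∈ W, X.det.im = 0 ∧ 0 ≤ X.det.re)
    (X Y : M2) (hX : X ∈ W) (hY : Y ∈ W) (hY1 : Y.det = 1) (h0 : X.det = 0) :
    (X * Y.adjugate).trace = 0 := by
  have key : ∀ t : ℝ, (t • X + Y).det = t * (X * Y.adjugate).trace + 1 := by
    intro t
    have h1 := polar (t • X) Y
    have h2 : (t • X).det = (t : ℂ)^2 * X.det := by
      simp [Matrix.det_fin_two]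
    rw [Matrix.smul_mul, Matrix.trace_smul, h2, h0, hY1, Complex.real_smul] at h1
    linear_combination -h1
  have him : (X * Y.adjugate).trace.im = 0 := by
    have := (hW _ (W.add_mem (W.smul_mem 1 hX) hY)).1
    rw [key] at this
    simpa using this
  have hre : (X * Y.adjugate).trace.re = 0 := by
    by_contra hne
    have := (hW _ (W.add_mem (W.smul_mem (-2 / (X * Y.adjugate).trace.re) hX) hY)).2
    rw [key] at this
    simp at this
    rw [div_mul_cancel₀ _ hne] at this
    linarith
  exact Complex.ext hre him

theorem stmt11 (P₁ P₂ P₃ : Matrix.SpecialLinearGroup (Fin 2) ℂ)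
    (hirr : ¬ ∃ ℓ : Fin 2 → ℂ, ℓ ≠ 0 ∧
        ∀ g ∈ Subgroup.closure {P₁, P₂, P₃},
          ∃ μ : ℂ, (g : Matrix (Fin 2) (Fin 2) ℂ).mulVec ℓ = μ • ℓ)
    (T : Matrix (Fin 4) (Fin 4) ℂ)
    (hT : T = Matrix.of fun i j : Fin 4 =>
        (1/2 : ℂ) *
          (((![1, ↑P₁, ↑P₂, ↑P₃] : Fin 4 → Matrix (Fin 2) (Fin 2) ℂ) i) *
           ((![1, ↑P₁, ↑P₂, ↑P₃] : Fin 4 → Matrix (Fin 2) (Fin 2) ℂ) j).adjugate).trace) :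
    (∃ C : Matrix.SpecialLinearGroup (Fin 2) ℂ,
        ∀ g ∈ Subgroup.closure {P₁, P₂, P₃},
          ((C * g * C⁻¹ : Matrix.SpecialLinearGroup (Fin 2) ℂ) : Matrix (Fin 2) (Fin 2) ℂ) ∈
            Matrix.unitaryGroup (Fin 2) ℂ) ↔
      ((∀ i j, (T i j).im = 0) ∧
        ∀ v : Fin 4 → ℝ, 0 ≤ ∑ i, ∑ j, v i * (T i j).re * v j) := by
  set P : Fin 4 → M2 := ![1, ↑P₁, ↑P₂, ↑P₃] with hP
  have hTP : ∀ i j, T i j = (1/2 : ℂ) * (P i * (P j).adjugate).trace := by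
    intro i j; rw [hT]; rfl
  have hPdet : ∀ i, (P i).det = 1 := by
    intro i
    fin_cases i
    · simp [hP]
    · exact P₁.2
    · exact P₂.2
    · exact P₃.2
  have hdc : ∀ v : Fin 4 → ℝ, (∑ i, v i • P i).det = ∑ i, ∑ j, (v i : ℂ) * T i j * v j := by
    intro v
    rw [det_comb]
    simp only [hTP]
  constructor
  · rintro ⟨C, hC⟩
    have hq : ∀ g ∈ Subgroup.closure {P₁, P₂, P₃}, QuatM (C.1 * g.1 * (C⁻¹).1) := by
      intro g hg
      have := unitary_quat _ (hC g hg) (C * g * C⁻¹).2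
      exact this
    have hPq : ∀ i, QuatM (C.1 * P i * (C⁻¹).1) := by
      intro i
      fin_cases i
      · exact hq 1 (one_mem _)
      · exact hq P₁ (Subgroup.subset_closure (by simp))
      · exact hq P₂ (Subgroup.subset_closure (by simp))
      · exact hq P₃ (Subgroup.subset_closure (by simp))
    have hcomb : ∀ v : Fin 4 → ℝ, QuatM (C.1 * (∑ i, v i • P i) * (C⁻¹).1) := by
      intro v
      simp only [Fin.sum_univ_four, Matrix.mul_add, Matrix.add_mul, Matrix.mul_smul,
        Matrix.smul_mul]
      exact quat_add _ _ (quat_add _ _ (quat_add _ _ (quat_smul _ _ (hPq 0))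
        (quat_smul _ _ (hPq 1))) (quat_smul _ _ (hPq 2))) (quat_smul _ _ (hPq 3))
    have hd : ∀ X : M2, (C.1 * X * (C⁻¹).1).det = X.det := by
      intro X
      rw [Matrix.det_mul, Matrix.det_mul, C.2, (C⁻¹).2]; ring
    have him : ∀ i j, (T i j).im = 0 := by
      intro i j
      have h1 := (quat_det _ (quat_add _ _ (hPq i) (hPq j))).1
      rw [← Matrix.add_mul, ← Matrix.mul_add, hd] at h1
      rw [hTP, polar, hPdet, hPdet]
      simp [h1]
    refine ⟨him, fun v => ?_⟩
    have h1 := (quat_det _ (hcomb v)).2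
    rw [hd, hdc] at h1
    simpa [him] using h1
  · rintro ⟨him, hpos⟩
    let W : Submodule ℝ M2 := LinearMap.range (Fintype.linearCombination ℝ P)
    have hPW : ∀ i, P i ∈ W := by
      intro i
      refine ⟨Pi.single i 1, ?_⟩
      simp
    have hW : ∀ X ∈ W, X.det.im = 0 ∧ 0 ≤ X.det.re := by
      rintro X ⟨v, rfl⟩
      rw [Fintype.linearCombination_apply, hdc]
      refine ⟨by simp [him], ?_⟩
      have := hpos v
      simpa [him] using this
    have hgood : GoodW W := by
      refine ⟨hPW 0, fun X hX => ⟨(hW X hX).1, (hW X hX).2, fun h0 => ?_⟩⟩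
      by_contra hne
      have horth : ∀ i, (X * (P i).adjugate).trace = 0 := fun i =>
        null_orth W hW X (P i) hX (hPW i) (hPdet i) h0
      have htr : X 1 1 = - X 0 0 := by
        have := horth 0
        simp [hP, Matrix.trace_fin_two] at this
        linear_combination this
      obtain ⟨ℓ, hℓ, hline⟩ := nilp_line X htr h0 hne
      have hPl : ∀ i, ∃ μ : ℂ, (P i).mulVec ℓ = μ • ℓ := by
        intro i
        apply hline
        have := horth i
        simp [Matrix.trace_fin_two, Matrix.mul_apply, Fin.sum_univ_two,
          Matrix.adjugate_fin_two, htr] at this ⊢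
        linear_combination -this
      refine hirr ⟨ℓ, hℓ, closure_line _ ℓ hℓ ?_⟩
      rintro g (rfl | rfl | rfl)
      · exact hPl 1
      · exact hPl 2
      · exact hPl 3
    obtain ⟨C, hC⟩ := lemC W hgood
    refine ⟨C, closure_unitary _ C ?_⟩
    rintro g (rfl | rfl | rfl)
    · exact quat_unitary _ (hC _ (hPW 1)) (C * g * C⁻¹).2
    · exact quat_unitary _ (hC _ (hPW 2)) (C * g * C⁻¹).2
    · exact quat_unitary _ (hC _ (hPW 3)) (C * g * C⁻¹).2
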